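/- For every bounded continuous potential f ∈ C_b(X,ℝ) there exists μ_f ∈ M^a_σ(X) such that h^v(μ_f) + μ_f(f) = sup_{μ ∈ M^a_σ(X)} [ h^v(μ) + μ(f) ]; moreover μ_f can be chosen to be an extreme point of M^a_σ(X). -/

import Mathlib

open MeasureTheory Filter Topology BoundedContinuousFunction

noncomputable section

variable {E : Type*} [MetricSpace E]

/-- The metric on the sequence space `X = E^ℕ`:
`d_X(x,y) = ∑_{n=1}^∞ 2⁻ⁿ · min(d_E(x_n,y_n), 1)`. -/
def dX (x y : ℕ → E) : ℝ :=
  ∑' n : ℕ, ((1 : ℝ) / 2) ^ (n + 1) * min (dist (x n) (y n)) 1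

/-- The left shift `σ(x₁,x₂,x₃,…) = (x₂,x₃,…)`. -/
def shift (x : ℕ → E) : ℕ → E := fun n => x (n + 1)

theorem continuous_shift : Continuous (shift (E := E)) :=
  continuous_pi fun n => continuous_apply (n + 1)

/-- Prepending one symbol: `ax = (a, x₁, x₂, …)`. -/
def cons (a : E) (x : ℕ → E) : ℕ → E := fun n => Nat.casesOn n a x

/-- Prepending a finite word `a = (a₁,…,a_n)`. -/
def prepend {n : ℕ} (a : Fin n → E) (x : ℕ → E) : ℕ → E :=
  fun k => if h : k < n then a ⟨k, h⟩ else x (k - n)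

/-- Birkhoff sums `f_n = ∑_{k=0}^{n-1} f ∘ σᵏ`. -/
def birkhoff (f : (ℕ → E) → ℝ) (n : ℕ) (x : ℕ → E) : ℝ :=
  ∑ k ∈ Finset.range n, f (shift^[k] x)

/-- Boundedness of a real-valued function on `X`. -/
def Bdd (g : (ℕ → E) → ℝ) : Prop := ∃ M : ℝ, ∀ x, |g x| ≤ M

/-- `g` is `α`-Hölder with constant `C` (w.r.t. the metric `dX`). -/
def HolderConst (α C : ℝ) (g : (ℕ → E) → ℝ) : Prop :=
  ∀ x y, |g x - g y| ≤ C * dX x y ^ α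

/-- `g ∈ Hol(α)`: bounded, continuous and `α`-Hölder. -/
def MemHol (α : ℝ) (g : (ℕ → E) → ℝ) : Prop :=
  Continuous g ∧ Bdd g ∧ ∃ C : ℝ, HolderConst α C g

/-- `g ∈ C_b(X,ℝ)`: bounded and continuous. -/
def MemCb (g : (ℕ → E) → ℝ) : Prop := Continuous g ∧ Bdd g

/-- The Hölder seminorm `D_α(g) = sup_{x ≠ y} |g x - g y| / d_X(x,y)^α`. -/
def Dalpha (α : ℝ) (g : (ℕ → E) → ℝ) : ℝ :=
  sSup {r : ℝ | ∃ x y : ℕ → E, x ≠ y ∧ r = |g x - g y| / dX x y ^ α}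

/-- The supremum norm `‖g‖_∞`. -/
def supNorm (g : (ℕ → E) → ℝ) : ℝ := ⨆ x : ℕ → E, |g x|

/-- The Hölder norm `‖g‖_α = ‖g‖_∞ + D_α(g)`. -/
def alphaNorm (α : ℝ) (g : (ℕ → E) → ℝ) : ℝ := supNorm g + Dalpha α g

variable [MeasurableSpace E] [BorelSpace E]

/-- The Ruelle transfer operator `L_f φ(x) = ∫_E e^{f(ax)} φ(ax) dp(a)`. -/
def ruelle (p : Measure E) (f φ : (ℕ → E) → ℝ) : (ℕ → E) → ℝ :=
  fun x => ∫ a, Real.exp (f (cons a x)) * φ (cons a x) ∂p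

/-- The normalized operators `P^m_n(φ) = L_f^m(φ · L_f^n 1) / L_f^{m+n} 1`. -/
def Pmn (p : Measure E) (f : (ℕ → E) → ℝ) (m n : ℕ) (φ : (ℕ → E) → ℝ) : (ℕ → E) → ℝ :=
  fun x => (ruelle p f)^[m] (fun y => φ y * (ruelle p f)^[n] (fun _ => 1) y) x /
    (ruelle p f)^[m + n] (fun _ => 1) x

/-- The equivalent bounded metric `d̄(x,y) = min{1, 4 C_f d_X(x,y)^α}`. -/
def dbar (Cf α : ℝ) (x y : ℕ → E) : ℝ := min 1 (4 * Cf * dX x y ^ α)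

/-- The Wasserstein distance associated to `d̄`, via Kantorovich duality. -/
def wass (Cf α : ℝ) (μ₁ μ₂ : Measure (ℕ → E)) : ℝ :=
  sSup {r : ℝ | ∃ g : (ℕ → E) → ℝ,
    (∀ x y, |g x - g y| ≤ dbar Cf α x y) ∧ r = (∫ x, g x ∂μ₁) - ∫ x, g x ∂μ₂}

/-- The shift as a continuous self-map of `X`. -/
def shiftCM : C(ℕ → E, ℕ → E) := ⟨shift, continuous_shift⟩

variable (E) in
/-- `M^a_1(X)`: the finitely additive probability functionals, i.e. the weak-* dual
elements `μ` of `C_b(X,ℝ)` with `μ(1) = 1` and `μ(g) ≥ 0` whenever `g ≥ 0`. -/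
def Ma1 : Set (WeakDual ℝ ((ℕ → E) →ᵇ ℝ)) :=
  {μ | μ 1 = 1 ∧ ∀ g : (ℕ → E) →ᵇ ℝ, 0 ≤ g → 0 ≤ μ g}

variable (E) in
/-- `M^a_σ(X)`: the shift-invariant elements of `M^a_1(X)`. -/
def Maσ : Set (WeakDual ℝ ((ℕ → E) →ᵇ ℝ)) :=
  {μ | μ ∈ Ma1 E ∧ ∀ g : (ℕ → E) →ᵇ ℝ, μ (g.compContinuous shiftCM) = μ g}

/-- `log λ_g = lim_{n→∞} (1/n) log (L_g^n 1)(x₀)`, which exists and is independent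
of the choice of `x₀ ∈ X` for bounded Hölder `g`. -/
def logLambda [Nonempty E] (p : Measure E) (g : (ℕ → E) → ℝ) : ℝ :=
  limUnder atTop fun n : ℕ =>
    (1 / (n : ℝ)) * Real.log ((ruelle p g)^[n] (fun _ => 1) (Classical.arbitrary (ℕ → E)))

/-- The variational entropy `h^v(μ) = inf { -μ(g) + log λ_g : g ∈ Hol(α) bounded }`,
with values in `ℝ ∪ {-∞}` (encoded in `EReal`). -/
def entropyV [Nonempty E] (p : Measure E) (α : ℝ) (μ : WeakDual ℝ ((ℕ → E) →ᵇ ℝ)) : EReal :=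
  sInf {r : EReal | ∃ g : (ℕ → E) →ᵇ ℝ, (∃ C : ℝ, HolderConst α C ⇑g) ∧
    r = ((-(μ g) + logLambda p ⇑g : ℝ) : EReal)}

set_option linter.unusedSectionVars false

/-! ### Elementary facts on the metric -/

theorem dX_summable (x y : ℕ → E) :
    Summable fun n : ℕ => ((1 : ℝ) / 2) ^ (n + 1) * min (dist (x n) (y n)) 1 := by
  have h : Summable fun n : ℕ => ((1 : ℝ) / 2) ^ (n + 1) :=
    (summable_nat_add_iff 1).2 summable_geometric_two
  refine Summable.of_nonneg_of_le (fun n => ?_) (fun n => ?_) h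
  · have : 0 ≤ min (dist (x n) (y n)) 1 := le_min dist_nonneg zero_le_one
    positivity
  · have : min (dist (x n) (y n)) 1 ≤ 1 := min_le_right _ _
    exact mul_le_of_le_one_right (by positivity) this

theorem dX_nonneg (x y : ℕ → E) : 0 ≤ dX x y := by
  refine tsum_nonneg fun n => ?_
  have : 0 ≤ min (dist (x n) (y n)) 1 := le_min dist_nonneg zero_le_one
  positivity

theorem dX_le_one (x y : ℕ → E) : dX x y ≤ 1 := by
  have h : HasSum (fun n : ℕ => ((1 : ℝ) / 2) ^ (n + 1)) 1 := by
    have := hasSum_geometric_two' (1 : ℝ)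
    refine this.congr_fun ?_ |> fun h => h
    intro n
    rw [pow_succ, one_div_pow]
    ring
  rw [← h.tsum_eq]
  refine (dX_summable x y).tsum_le_tsum (fun n => ?_) h.summable
  exact mul_le_of_le_one_right (by positivity) (min_le_right _ _)

theorem dX_eq (x y : ℕ → E) :
    dX x y = (1 / 2) * min (dist (x 0) (y 0)) 1 + dX (shift x) (shift y) / 2 := by
  unfold dX
  rw [(dX_summable x y).tsum_eq_zero_add, ← tsum_div_const]
  simp only [shift]
  congr 1
  · simp
  · congr 1
    ext n
    rw [pow_succ]
    ring

theorem dX_cons (a : E) (x y : ℕ → E) : dX (cons a x) (cons a y) = dX x y / 2 := by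
  have h := dX_eq (cons a x) (cons a y)
  have h1 : dist (cons a x 0) (cons a y 0) = 0 := dist_self a
  have h2 : dX (shift (cons a x)) (shift (cons a y)) = dX x y := rfl
  rw [h, h1, h2]
  simp

theorem dX_shift (x y : ℕ → E) : dX (shift x) (shift y) ≤ 2 * dX x y := by
  have h := dX_eq x y
  have : 0 ≤ min (dist (x 0) (y 0)) 1 := le_min dist_nonneg zero_le_one
  linarith

theorem cons_shift_aux (a : E) (x : ℕ → E) : shift (cons a x) = x := rfl

theorem continuous_cons : Continuous fun q : E × (ℕ → E) => cons q.1 q.2 := by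
  refine continuous_pi fun n => ?_
  cases n with
  | zero => exact continuous_fst
  | succ n => exact (continuous_apply n).comp continuous_snd

theorem continuous_cons_left (x : ℕ → E) : Continuous fun a : E => cons a x :=
  continuous_cons.comp (by fun_prop : Continuous fun a : E => (a, x))

theorem continuous_cons_right (a : E) : Continuous fun x : ℕ → E => cons a x :=
  continuous_cons.comp (by fun_prop : Continuous fun x : ℕ → E => (a, x))

/-! ### Operators on bounded continuous functions -/

/-- Composition with the shift. -/
def Sh (φ : (ℕ → E) →ᵇ ℝ) : (ℕ → E) →ᵇ ℝ := φ.compContinuous shiftCM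

theorem Sh_apply (φ : (ℕ → E) →ᵇ ℝ) (x : ℕ → E) : Sh φ x = φ (shift x) := rfl

theorem Sh_iter_apply (n : ℕ) (φ : (ℕ → E) →ᵇ ℝ) (x : ℕ → E) :
    Sh^[n] φ x = φ (shift^[n] x) := by
  induction n generalizing φ with
  | zero => rfl
  | succ n ih => rw [Function.iterate_succ_apply, ih, Sh_apply, Function.iterate_succ_apply']

theorem Sh_iter_mul (n : ℕ) (φ ψ : (ℕ → E) →ᵇ ℝ) : Sh^[n] (φ * ψ) = Sh^[n] φ * Sh^[n] ψ := by
  ext x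
  simp [Sh_iter_apply]

/-- The exponential of a bounded continuous function. -/
def expB (g : (ℕ → E) →ᵇ ℝ) : (ℕ → E) →ᵇ ℝ :=
  BoundedContinuousFunction.ofNormedAddCommGroup (fun x => Real.exp (g x))
    (Real.continuous_exp.comp g.continuous) (Real.exp ‖g‖) (fun x => by
      rw [Real.norm_eq_abs, Real.abs_exp]
      exact Real.exp_le_exp.2 ((le_abs_self _).trans (g.norm_coe_le_norm x)))

theorem expB_apply (g : (ℕ → E) →ᵇ ℝ) (x : ℕ → E) : expB g x = Real.exp (g x) := rfl

theorem integrable_cons (p : Measure E) [IsProbabilityMeasure p] (φ : (ℕ → E) →ᵇ ℝ) (x : ℕ → E) :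
    Integrable (fun a => φ (cons a x)) p := by
  have hc : Continuous fun a => φ (cons a x) := φ.continuous.comp (continuous_cons_left x)
  refine Integrable.of_bound hc.stronglyMeasurable.aestronglyMeasurable ‖φ‖ ?_
  exact Eventually.of_forall fun a => φ.norm_coe_le_norm _

/-- The averaging operator `A φ (x) = ∫ φ(ax) dp(a)`. -/
def avg (p : Measure E) [IsProbabilityMeasure p] (φ : (ℕ → E) →ᵇ ℝ) : (ℕ → E) →ᵇ ℝ :=
  BoundedContinuousFunction.ofNormedAddCommGroup (fun x => ∫ a, φ (cons a x) ∂p)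
    (MeasureTheory.continuous_of_dominated (bound := fun _ => ‖φ‖)
      (fun x => (integrable_cons p φ x).aestronglyMeasurable)
      (fun x => Eventually.of_forall fun a => φ.norm_coe_le_norm _)
      (integrable_const _)
      (Eventually.of_forall fun a => φ.continuous.comp (continuous_cons_right a)))
    ‖φ‖ (fun x => by
      have := norm_integral_le_of_norm_le_const (μ := p) (f := fun a => φ (cons a x)) (C := ‖φ‖)
        (Eventually.of_forall fun a => φ.norm_coe_le_norm _)
      simpa using this)

section
variable (p : Measure E) [IsProbabilityMeasure p]

theorem avg_apply (φ : (ℕ → E) →ᵇ ℝ) (x : ℕ → E) : avg p φ x = ∫ a, φ (cons a x) ∂p := rfl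

theorem avg_mono {φ ψ : (ℕ → E) →ᵇ ℝ} (h : φ ≤ ψ) : avg p φ ≤ avg p ψ := fun x =>
  integral_mono (integrable_cons p φ x) (integrable_cons p ψ x) fun _ => h _

theorem avg_add (φ ψ : (ℕ → E) →ᵇ ℝ) : avg p (φ + ψ) = avg p φ + avg p ψ := by
  ext x
  exact integral_add (integrable_cons p φ x) (integrable_cons p ψ x)

theorem avg_smul (c : ℝ) (φ : (ℕ → E) →ᵇ ℝ) : avg p (c • φ) = c • avg p φ := by
  ext x
  exact integral_const_mul c _

theorem avg_one : avg p 1 = 1 := by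
  ext x
  simp [avg_apply]

theorem avg_Sh_mul (φ ψ : (ℕ → E) →ᵇ ℝ) : avg p (Sh φ * ψ) = φ * avg p ψ := by
  ext x
  exact integral_const_mul (φ x) _

theorem avgn_mono (n : ℕ) {φ ψ : (ℕ → E) →ᵇ ℝ} (h : φ ≤ ψ) : (avg p)^[n] φ ≤ (avg p)^[n] ψ := by
  induction n generalizing φ ψ with
  | zero => exact h
  | succ n ih => exact ih (avg_mono p h)

theorem avgn_add (n : ℕ) (φ ψ : (ℕ → E) →ᵇ ℝ) :
    (avg p)^[n] (φ + ψ) = (avg p)^[n] φ + (avg p)^[n] ψ := by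
  induction n generalizing φ ψ with
  | zero => rfl
  | succ n ih => simp only [Function.iterate_succ_apply, avg_add, ih]

theorem avgn_smul (n : ℕ) (c : ℝ) (φ : (ℕ → E) →ᵇ ℝ) :
    (avg p)^[n] (c • φ) = c • (avg p)^[n] φ := by
  induction n generalizing φ with
  | zero => rfl
  | succ n ih => simp only [Function.iterate_succ_apply, avg_smul, ih]

theorem avgn_one (n : ℕ) : (avg p)^[n] 1 = 1 := by
  induction n with
  | zero => rfl
  | succ n ih => simp only [Function.iterate_succ_apply, avg_one, ih]

theorem avgn_Sh_mul (n : ℕ) (φ ψ : (ℕ → E) →ᵇ ℝ) :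
    (avg p)^[n] (Sh^[n] φ * ψ) = φ * (avg p)^[n] ψ := by
  induction n generalizing ψ with
  | zero => rfl
  | succ n ih =>
    rw [Function.iterate_succ_apply, Function.iterate_succ_apply', avg_Sh_mul, ih,
      Function.iterate_succ_apply]

theorem avgn_Sh (n : ℕ) (φ : (ℕ → E) →ᵇ ℝ) : (avg p)^[n] (Sh^[n] φ) = φ := by
  have := avgn_Sh_mul p n φ 1
  rwa [mul_one, avgn_one, mul_one] at this

theorem avgn_sum {ι : Type*} (n : ℕ) (s : Finset ι) (φ : ι → (ℕ → E) →ᵇ ℝ) :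
    (avg p)^[n] (∑ i ∈ s, φ i) = ∑ i ∈ s, (avg p)^[n] (φ i) := by
  classical
  induction s using Finset.induction_on with
  | empty =>
    have := avgn_smul p n 0 0
    simpa using this
  | insert a s ha ih => rw [Finset.sum_insert ha, Finset.sum_insert ha, avgn_add, ih]

/-- Ruelle operator on bounded continuous functions. -/
def RB (g φ : (ℕ → E) →ᵇ ℝ) : (ℕ → E) →ᵇ ℝ := avg p (expB g * φ)

theorem ruelle_iter (g φ : (ℕ → E) →ᵇ ℝ) (n : ℕ) : (ruelle p g)^[n] φ = ⇑((RB p g)^[n] φ) := by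
  induction n generalizing φ with
  | zero => rfl
  | succ n ih =>
    rw [Function.iterate_succ_apply, Function.iterate_succ_apply, ← ih]
    rfl

end

/-- Birkhoff sums as bounded continuous functions. -/
def SB (g : (ℕ → E) →ᵇ ℝ) : ℕ → (ℕ → E) →ᵇ ℝ
  | 0 => 0
  | n + 1 => g + Sh (SB g n)

theorem RB_iter (p : Measure E) [IsProbabilityMeasure p] (g φ : (ℕ → E) →ᵇ ℝ) (n : ℕ) :
    (RB p g)^[n] φ = (avg p)^[n] (expB (SB g n) * φ) := by
  induction n generalizing φ with
  | zero =>
    ext x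
    simp [SB, expB_apply]
  | succ n ih =>
    rw [Function.iterate_succ_apply, ih, RB, ← avg_Sh_mul, Function.iterate_succ_apply]
    congr 2
    ext x
    simp [SB, expB_apply, Sh_apply, Real.exp_add]
    ring

theorem SB_apply (g : (ℕ → E) →ᵇ ℝ) (n : ℕ) (x : ℕ → E) :
    SB g n x = ∑ i ∈ Finset.range n, g (shift^[i] x) := by
  induction n generalizing x with
  | zero => simp [SB]
  | succ n ih =>
    rw [Finset.sum_range_succ', SB]
    simp only [BoundedContinuousFunction.coe_add, Pi.add_apply, Sh_apply, ih,
      Function.iterate_succ_apply, Function.iterate_zero, id]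
    ring

theorem SB_add (g : (ℕ → E) →ᵇ ℝ) (m n : ℕ) (x : ℕ → E) :
    SB g (m + n) x = SB g m x + SB g n (shift^[m] x) := by
  simp only [SB_apply, Finset.sum_range_add]
  congr 1
  refine Finset.sum_congr rfl fun i _ => ?_
  rw [add_comm m i, Function.iterate_add_apply]

theorem SB_abs_le (g : (ℕ → E) →ᵇ ℝ) (n : ℕ) (x : ℕ → E) : |SB g n x| ≤ n * ‖g‖ := by
  rw [SB_apply]
  refine (Finset.abs_sum_le_sum_abs _ _).trans ?_
  refine (Finset.sum_le_card_nsmul _ _ ‖g‖ fun i _ => g.norm_coe_le_norm _).trans ?_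
  simp

theorem SB_invariant (μ : WeakDual ℝ ((ℕ → E) →ᵇ ℝ)) (hμ : μ ∈ Maσ E) (g : (ℕ → E) →ᵇ ℝ)
    (n : ℕ) : μ (SB g n) = n * μ g := by
  induction n with
  | zero => simp [SB]
  | succ n ih =>
    have := hμ.2 (SB g n)
    change μ (Sh (SB g n)) = _ at this
    rw [SB, map_add, this, ih]
    push_cast
    ring

/-! ### Bounded distortion and the pressure -/

set_option linter.unusedSimpArgs false

theorem leB {φ ψ : (ℕ → E) →ᵇ ℝ} : φ ≤ ψ ↔ ∀ x, φ x ≤ ψ x := Iff.rfl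

section
variable (p : Measure E) [IsProbabilityMeasure p]

theorem RB_mono (g : (ℕ → E) →ᵇ ℝ) {φ ψ : (ℕ → E) →ᵇ ℝ} (h : φ ≤ ψ) : RB p g φ ≤ RB p g ψ := by
  refine avg_mono p fun x => ?_
  exact mul_le_mul_of_nonneg_left (h x) (Real.exp_pos _).le

theorem RBn_mono (n : ℕ) (g : (ℕ → E) →ᵇ ℝ) {φ ψ : (ℕ → E) →ᵇ ℝ} (h : φ ≤ ψ) :
    (RB p g)^[n] φ ≤ (RB p g)^[n] ψ := by
  induction n generalizing φ ψ with
  | zero => exact h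
  | succ n ih => exact ih (RB_mono p g h)

theorem RBn_smul (n : ℕ) (g : (ℕ → E) →ᵇ ℝ) (c : ℝ) (φ : (ℕ → E) →ᵇ ℝ) :
    (RB p g)^[n] (c • φ) = c • (RB p g)^[n] φ := by
  rw [RB_iter, RB_iter, ← avgn_smul, mul_smul_comm]

theorem RBn_lower (g : (ℕ → E) →ᵇ ℝ) (n : ℕ) (x : ℕ → E) :
    Real.exp (-(n * ‖g‖)) ≤ (RB p g)^[n] 1 x := by
  have h : (avg p)^[n] (Real.exp (-(n * ‖g‖)) • 1) ≤ (avg p)^[n] (expB (SB g n) * 1) := by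
    refine avgn_mono p n fun y => ?_
    have := (abs_le.1 (SB_abs_le g n y)).1
    simpa [expB_apply] using this
  have h2 := h x
  rw [avgn_smul, avgn_one, ← RB_iter] at h2
  simpa using h2

theorem RBn_upper (g : (ℕ → E) →ᵇ ℝ) (n : ℕ) (x : ℕ → E) :
    (RB p g)^[n] 1 x ≤ Real.exp (n * ‖g‖) := by
  have h : (avg p)^[n] (expB (SB g n) * 1) ≤ (avg p)^[n] (Real.exp (n * ‖g‖) • 1) := by
    refine avgn_mono p n fun y => ?_
    have := (abs_le.1 (SB_abs_le g n y)).2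
    simpa [expB_apply] using this
  have h2 := h x
  rw [avgn_smul, avgn_one, ← RB_iter] at h2
  simpa using h2

theorem RBn_pos (g : (ℕ → E) →ᵇ ℝ) (n : ℕ) (x : ℕ → E) : 0 < (RB p g)^[n] 1 x :=
  (Real.exp_pos _).trans_le (RBn_lower p g n x)

theorem distortion {α : ℝ} (hα : 0 < α) {C : ℝ} (hC : 0 ≤ C) {g : (ℕ → E) →ᵇ ℝ}
    (hg : HolderConst α C g) (n : ℕ) (x y : ℕ → E) :
    (RB p g)^[n] 1 x ≤ Real.exp (C / (2 ^ α - 1) * dX x y ^ α) * (RB p g)^[n] 1 y := by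
  have h2 : (1 : ℝ) < 2 ^ α := Real.one_lt_rpow (by norm_num) hα
  set D := C / (2 ^ α - 1) with hD
  have hD0 : 0 ≤ D := div_nonneg hC (by linarith)
  have hCD : (C + D) / 2 ^ α = D := by
    have h3 : (2 : ℝ) ^ α - 1 ≠ 0 := by linarith
    rw [hD]
    field_simp
    ring
  induction n generalizing x y with
  | zero =>
    have : 0 ≤ dX x y ^ α := Real.rpow_nonneg (dX_nonneg _ _) _
    simpa using mul_nonneg hD0 this
  | succ n ih =>
    rw [Function.iterate_succ_apply']
    set φ := (RB p g)^[n] 1 with hφ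
    simp only [RB, avg_apply]
    rw [← integral_const_mul]
    refine integral_mono (integrable_cons p _ x) ((integrable_cons p _ y).const_mul _) fun a => ?_
    simp only [BoundedContinuousFunction.coe_mul, Pi.mul_apply, expB_apply]
    have h3 := ih (cons a x) (cons a y)
    have h4 := (abs_le.1 (hg (cons a x) (cons a y))).2
    have h5 : dX (cons a x) (cons a y) ^ α = dX x y ^ α / 2 ^ α := by
      rw [dX_cons, Real.div_rpow (dX_nonneg _ _) (by norm_num)]
    rw [h5] at h3 h4
    have h6 : Real.exp (g (cons a x)) ≤
        Real.exp (C * (dX x y ^ α / 2 ^ α)) * Real.exp (g (cons a y)) := by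
      rw [← Real.exp_add]
      exact Real.exp_le_exp.2 (by linarith)
    have h7 : Real.exp (D * dX x y ^ α) =
        Real.exp (C * (dX x y ^ α / 2 ^ α)) * Real.exp (D * (dX x y ^ α / 2 ^ α)) := by
      rw [← Real.exp_add]
      congr 1
      conv_lhs => rw [← hCD]
      ring
    calc _ ≤ (Real.exp (C * (dX x y ^ α / 2 ^ α)) * Real.exp (g (cons a y))) *
          (Real.exp (D * (dX x y ^ α / 2 ^ α)) * φ (cons a y)) :=
          mul_le_mul h6 h3 (RBn_pos p g n _).le (by positivity)
      _ = _ := by rw [h7]; ring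

theorem pressure_exists [Nonempty E] {α : ℝ} (hα : 0 < α) {g : (ℕ → E) →ᵇ ℝ}
    (hg : ∃ C, HolderConst α C g) :
    Tendsto (fun n : ℕ => (1 / (n : ℝ)) *
        Real.log ((RB p g)^[n] 1 (Classical.arbitrary (ℕ → E)))) atTop (𝓝 (logLambda p g)) ∧
      ∃ K : ℝ, ∀ n x, (RB p g)^[n] 1 x ≤ Real.exp (n * logLambda p g + K) := by
  obtain ⟨C', hC'⟩ := hg
  obtain ⟨C, hC, hg⟩ : ∃ C, 0 ≤ C ∧ HolderConst α C g := by
    refine ⟨|C'|, abs_nonneg _, fun x y => (hC' x y).trans ?_⟩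
    exact mul_le_mul_of_nonneg_right (le_abs_self _) (Real.rpow_nonneg (dX_nonneg _ _) _)
  have h2 : (1 : ℝ) < 2 ^ α := Real.one_lt_rpow (by norm_num) hα
  set D := C / (2 ^ α - 1) with hD
  have hD0 : 0 ≤ D := div_nonneg hC (by linarith)
  have dist : ∀ n x y, (RB p g)^[n] 1 x ≤ Real.exp D * (RB p g)^[n] 1 y := by
    intro n x y
    refine (distortion p hα hC hg n x y).trans ?_
    refine mul_le_mul_of_nonneg_right (Real.exp_le_exp.2 ?_) (RBn_pos p g n y).le
    exact mul_le_of_le_one_right hD0 (Real.rpow_le_one (dX_nonneg _ _) (dX_le_one _ _) hα.le)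
  set x0 := Classical.arbitrary (ℕ → E) with hx0
  set a : ℕ → ℝ := fun n => Real.log ((RB p g)^[n] 1 x0) with ha
  have hexp : ∀ n, Real.exp (a n) = (RB p g)^[n] 1 x0 := fun n => Real.exp_log (RBn_pos p g n x0)
  have hsup : ∀ m n, a m + a n - D ≤ a (m + n) := by
    intro m n
    rw [← Real.exp_le_exp, hexp, Function.iterate_add_apply]
    have h3 : (Real.exp (a n - D)) • (1 : (ℕ → E) →ᵇ ℝ) ≤ (RB p g)^[n] 1 := by
      refine leB.2 fun y => ?_
      have h4 := dist n x0 y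
      rw [← hexp] at h4
      rw [Real.exp_sub]
      simp only [BoundedContinuousFunction.coe_smul, BoundedContinuousFunction.coe_one,
        Pi.one_apply, smul_eq_mul, mul_one]
      rw [div_le_iff₀' (Real.exp_pos _)]
      exact h4
    have h5 := RBn_mono p m g h3 x0
    rw [RBn_smul] at h5
    have h6 : Real.exp (a m + a n - D) = Real.exp (a n - D) * (RB p g)^[m] 1 x0 := by
      rw [← hexp, ← Real.exp_add]
      congr 1
      ring
    rw [h6]
    exact h5
  have hsub : Subadditive fun n => -a n + D := by
    intro m n
    have := hsup m n
    simp only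
    linarith
  have hup : ∀ n, a n ≤ n * ‖g‖ := by
    intro n
    rw [← Real.exp_le_exp, hexp]
    exact RBn_upper p g n x0
  have hbdd : BddBelow (Set.range fun n : ℕ => (-a n + D) / n) := by
    refine ⟨-‖g‖, ?_⟩
    rintro _ ⟨n, rfl⟩
    simp only
    rcases Nat.eq_zero_or_pos n with rfl | hn
    · simp
    · have hn' : (0 : ℝ) < n := by exact_mod_cast hn
      rw [le_div_iff₀ hn']
      have := hup n
      linarith
  have hlim := hsub.tendsto_lim hbdd
  have hlim2 : Tendsto (fun n : ℕ => (1 / (n : ℝ)) * a n) atTop (𝓝 (-hsub.lim)) := by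
    have h3 : Tendsto (fun n : ℕ => D / (n : ℝ)) atTop (𝓝 0) :=
      tendsto_const_div_atTop_nhds_zero_nat D
    have h4 := h3.sub hlim
    rw [zero_sub] at h4
    refine h4.congr fun n => ?_
    ring
  have hlog : logLambda p g = -hsub.lim := by
    refine Tendsto.limUnder_eq (hlim2.congr fun n => ?_)
    have := ruelle_iter p g 1 n
    simp only [ha]
    rw [← this]
    rfl
  refine ⟨hlog ▸ hlim2, 2 * D, fun n x => ?_⟩
  rcases Nat.eq_zero_or_pos n with rfl | hn
  · simpa using hD0
  · have h3 := hsub.lim_le_div hbdd hn.ne'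
    have hn' : (0 : ℝ) < n := by exact_mod_cast hn
    rw [le_div_iff₀ hn'] at h3
    refine (dist n x x0).trans ?_
    rw [← hexp, ← Real.exp_add]
    refine Real.exp_le_exp.2 ?_
    rw [hlog]
    linarith

/-- Block sums. -/
def WB (n : ℕ) (H : (ℕ → E) →ᵇ ℝ) : ℕ → (ℕ → E) →ᵇ ℝ
  | 0 => 0
  | k + 1 => H + Sh^[n] (WB n H k)

theorem WB_bound (n : ℕ) (H : (ℕ → E) →ᵇ ℝ) (B : ℝ)
    (hB : (avg p)^[n] (expB H) ≤ B • 1) (hB0 : 0 ≤ B) (j : ℕ) :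
    (avg p)^[n * j] (expB (WB n H j)) ≤ B ^ j • 1 := by
  induction j with
  | zero =>
    intro x
    simp [WB, expB_apply]
  | succ j ih =>
    have h1 : expB (WB n H (j + 1)) = Sh^[n] (expB (WB n H j)) * expB H := by
      ext x
      simp [WB, expB_apply, Sh_iter_apply, Real.exp_add]
      ring
    rw [h1, Nat.mul_succ, Function.iterate_add_apply, avgn_Sh_mul]
    have h2 : expB (WB n H j) * (avg p)^[n] (expB H) ≤ B • expB (WB n H j) := by
      refine leB.2 fun x => ?_
      have h3 := mul_le_mul_of_nonneg_left (leB.1 hB x) (Real.exp_pos (WB n H j x)).le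
      simp only [BoundedContinuousFunction.coe_smul, BoundedContinuousFunction.coe_mul,
        BoundedContinuousFunction.coe_one, Pi.mul_apply, Pi.one_apply, smul_eq_mul, mul_one,
        expB_apply] at h3 ⊢
      linarith
    refine (avgn_mono p _ h2).trans ?_
    rw [avgn_smul]
    refine leB.2 fun x => ?_
    have h4 := mul_le_mul_of_nonneg_left (leB.1 ih x) hB0
    simp only [BoundedContinuousFunction.coe_smul, BoundedContinuousFunction.coe_one,
      Pi.one_apply, smul_eq_mul, mul_one] at h4 ⊢
    rw [pow_succ, mul_comm (B ^ j)]
    exact h4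

theorem SB_blocks (n : ℕ) (G H : (ℕ → E) →ᵇ ℝ) (hGH : ∀ x, H x = n * G x) (j : ℕ) (x : ℕ → E) :
    n * SB G (n * j) x = ∑ i ∈ Finset.range n, WB n H j (shift^[i] x) := by
  induction j generalizing x with
  | zero => simp [WB, SB]
  | succ j ih =>
    rw [Nat.mul_succ, add_comm, SB_add, mul_add, ih, SB_apply, Finset.mul_sum,
      ← Finset.sum_add_distrib]
    refine Finset.sum_congr rfl fun i _ => ?_
    simp only [WB, BoundedContinuousFunction.coe_add, Pi.add_apply, Sh_iter_apply, hGH]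
    rw [← Function.iterate_add_apply, ← Function.iterate_add_apply, add_comm i n]

theorem block_bound (n : ℕ) (hn : 0 < n) (G H : (ℕ → E) →ᵇ ℝ) (hGH : ∀ x, H x = n * G x) (B : ℝ)
    (hB : (avg p)^[n] (expB H) ≤ B • 1) (hB0 : 0 ≤ B) (j : ℕ) (x : ℕ → E) :
    (RB p G)^[n * j + n] 1 x ≤ Real.exp (n * ‖G‖) * B ^ j := by
  have hn' : (0 : ℝ) < n := by exact_mod_cast hn
  have h1 : expB (SB G (n * j + n)) * 1 ≤ Real.exp (n * ‖G‖) •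
      ((1 / (n : ℝ)) • ∑ i ∈ Finset.range n, Sh^[i] (expB (WB n H j))) := by
    refine leB.2 fun y => ?_
    simp only [mul_one, BoundedContinuousFunction.coe_smul, BoundedContinuousFunction.coe_sum,
      Finset.sum_apply, smul_eq_mul, expB_apply, Sh_iter_apply]
    rw [SB_add, add_comm, Real.exp_add]
    refine mul_le_mul (Real.exp_le_exp.2 (abs_le.1 (SB_abs_le G n _)).2) ?_ (Real.exp_pos _).le
      (Real.exp_pos _).le
    have h2 := convexOn_exp.map_sum_le (t := Finset.range n) (w := fun _ => 1 / (n : ℝ))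
      (p := fun i => WB n H j (shift^[i] y)) (fun _ _ => by positivity)
      (by simp [hn'.ne']) (fun _ _ => Set.mem_univ _)
    simp only [smul_eq_mul] at h2
    rw [← Finset.mul_sum, ← Finset.mul_sum, ← SB_blocks n G H hGH, ← mul_assoc,
      one_div_mul_cancel hn'.ne', one_mul] at h2
    exact h2
  have h3 := leB.1 (avgn_mono p (n * j + n) h1) x
  rw [← RB_iter, avgn_smul, avgn_smul, avgn_sum] at h3
  refine h3.trans ?_
  simp only [BoundedContinuousFunction.coe_smul, BoundedContinuousFunction.coe_sum,
      Finset.sum_apply, smul_eq_mul]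
  refine mul_le_mul_of_nonneg_left ?_ (Real.exp_pos _).le
  rw [one_div, inv_mul_le_iff₀ hn']
  have h4 : ∀ i ∈ Finset.range n,
      ((avg p)^[n * j + n] (Sh^[i] (expB (WB n H j)))) x ≤ B ^ j := by
    intro i hi
    have hi' : n * j + n = (n - i) + n * j + i := by
      have := Finset.mem_range.1 hi
      omega
    rw [hi', Function.iterate_add_apply, avgn_Sh, Function.iterate_add_apply]
    have h5 := avgn_mono p (n - i) (WB_bound p n H B hB hB0 j) x
    rw [avgn_smul, avgn_one] at h5
    simpa using h5
  refine (Finset.sum_le_card_nsmul _ _ _ h4).trans ?_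
  simp

theorem pressure_block [Nonempty E] {α : ℝ} (hα : 0 < α) (n : ℕ) (hn : 0 < n)
    (G H : (ℕ → E) →ᵇ ℝ) (hGH : ∀ x, H x = n * G x) (B : ℝ)
    (hB : (avg p)^[n] (expB H) ≤ B • 1) (hB0 : 0 < B) (hG : ∃ C, HolderConst α C G) :
    logLambda p G ≤ Real.log B / n := by
  have hn' : (0 : ℝ) < n := by exact_mod_cast hn
  have h1 := (pressure_exists p hα hG).1
  have hsub : Tendsto (fun j : ℕ => n * j + n) atTop atTop := by
    refine tendsto_atTop_mono (fun j => ?_) tendsto_id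
    have := Nat.le_mul_of_pos_left j hn
    simp only [id]
    omega
  have h2 := h1.comp hsub
  have h3 : Tendsto (fun j : ℕ => (‖G‖ - Real.log B / n) * (1 / ((j : ℝ) + 1)) + Real.log B / n)
      atTop (𝓝 ((‖G‖ - Real.log B / n) * 0 + Real.log B / n)) :=
    (tendsto_one_div_add_atTop_nhds_zero_nat.const_mul _).add_const _
  rw [mul_zero, zero_add] at h3
  refine le_of_tendsto_of_tendsto' h2 h3 fun j => ?_
  simp only [Function.comp]
  have h4 : Real.log ((RB p G)^[n * j + n] 1 (Classical.arbitrary (ℕ → E))) ≤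
      n * ‖G‖ + j * Real.log B := by
    have h5 := Real.log_le_log (RBn_pos p G _ _)
      (block_bound p n hn G H hGH B hB hB0.le j (Classical.arbitrary (ℕ → E)))
    rwa [Real.log_mul (Real.exp_pos _).ne' (pow_pos hB0 _).ne', Real.log_exp, Real.log_pow] at h5
  refine (mul_le_mul_of_nonneg_left h4 (by positivity)).trans (le_of_eq ?_)
  push_cast
  have : (j : ℝ) + 1 ≠ 0 := by positivity
  field_simp
  ring

end

/-! ### Affinity of the variational entropy -/

theorem holder_nonneg {α C : ℝ} {g : (ℕ → E) → ℝ} (hg : HolderConst α C g) :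
    HolderConst α |C| g := fun x y => (hg x y).trans
  (mul_le_mul_of_nonneg_right (le_abs_self _) (Real.rpow_nonneg (dX_nonneg _ _) _))

theorem holder_SB {α : ℝ} (hα : 0 < α) {g : (ℕ → E) →ᵇ ℝ} (hg : ∃ C, HolderConst α C g) (n : ℕ) :
    ∃ C, HolderConst α C (SB g n) := by
  induction n with
  | zero => exact ⟨0, fun x y => by simp [SB]⟩
  | succ n ih =>
    obtain ⟨C, hC⟩ := hg
    obtain ⟨D, hD⟩ := ih
    have hD := holder_nonneg hD
    refine ⟨C + |D| * 2 ^ α, fun x y => ?_⟩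
    have h1 := hC x y
    have h2 := hD (shift x) (shift y)
    have h3 : dX (shift x) (shift y) ^ α ≤ 2 ^ α * dX x y ^ α := by
      rw [← Real.mul_rpow (by norm_num) (dX_nonneg _ _)]
      exact Real.rpow_le_rpow (dX_nonneg _ _) (dX_shift x y) hα.le
    have h4 := mul_le_mul_of_nonneg_left h3 (abs_nonneg D)
    have h5 : SB g (n + 1) x - SB g (n + 1) y =
        (g x - g y) + (SB g n (shift x) - SB g n (shift y)) := by
      simp only [SB, BoundedContinuousFunction.coe_add, Pi.add_apply, Sh_apply]
      ring
    rw [h5]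
    refine (abs_add_le _ _).trans ?_
    calc _ ≤ C * dX x y ^ α + |D| * (2 ^ α * dX x y ^ α) := add_le_add h1 (h2.trans h4)
      _ = _ := by ring

theorem lse_ge_left (a b : ℝ) : a ≤ Real.log (Real.exp a + Real.exp b) := by
  rw [Real.le_log_iff_exp_le (by positivity)]
  linarith [Real.exp_pos b]

theorem lse_ge_right (a b : ℝ) : b ≤ Real.log (Real.exp a + Real.exp b) := by
  rw [Real.le_log_iff_exp_le (by positivity)]
  linarith [Real.exp_pos a]

theorem lse_le (a b c d t : ℝ) (h1 : a ≤ c + t) (h2 : b ≤ d + t) :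
    Real.log (Real.exp a + Real.exp b) ≤ Real.log (Real.exp c + Real.exp d) + t := by
  rw [Real.log_le_iff_le_exp (by positivity), Real.exp_add, Real.exp_log (by positivity), add_mul,
    ← Real.exp_add, ← Real.exp_add]
  exact add_le_add (Real.exp_le_exp.2 h1) (Real.exp_le_exp.2 h2)

/-- The function `log (e^u + e^v)`. -/
def lseB (u v : (ℕ → E) →ᵇ ℝ) : (ℕ → E) →ᵇ ℝ :=
  BoundedContinuousFunction.ofNormedAddCommGroup
    (fun x => Real.log (Real.exp (u x) + Real.exp (v x)))
    (Continuous.log (by fun_prop) (fun x => by positivity))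
    (‖u‖ + ‖v‖ + Real.log (Real.exp 0 + Real.exp 0)) (fun x => by
      have h1 := abs_le.1 (u.norm_coe_le_norm x)
      have h2 := abs_le.1 (v.norm_coe_le_norm x)
      have h3 := norm_nonneg u
      have h4 := norm_nonneg v
      have h5 := lse_le (u x) (v x) 0 0 (‖u‖ + ‖v‖) (by linarith) (by linarith)
      have h6 := lse_ge_left (u x) (v x)
      have h7 := lse_ge_left 0 0
      rw [Real.norm_eq_abs, abs_le]
      constructor <;> linarith)

theorem lseB_apply (u v : (ℕ → E) →ᵇ ℝ) (x : ℕ → E) :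
    lseB u v x = Real.log (Real.exp (u x) + Real.exp (v x)) := rfl

theorem expB_lseB (u v : (ℕ → E) →ᵇ ℝ) : expB (lseB u v) = expB u + expB v := by
  ext x
  simp only [expB_apply, lseB_apply, BoundedContinuousFunction.coe_add, Pi.add_apply]
  rw [Real.exp_log (by positivity)]

theorem holder_lseB {α : ℝ} {u v : (ℕ → E) →ᵇ ℝ} (hu : ∃ C, HolderConst α C u)
    (hv : ∃ C, HolderConst α C v) : ∃ C, HolderConst α C (lseB u v) := by
  obtain ⟨C, hC⟩ := hu
  obtain ⟨D, hD⟩ := hv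
  refine ⟨C + D, fun x y => ?_⟩
  have h1 := hC x y
  have h2 := hD x y
  have h3 := (abs_nonneg _).trans h1
  have h4 := (abs_nonneg _).trans h2
  rw [abs_le] at h1 h2
  rw [lseB_apply, lseB_apply, add_mul]
  have h5 := lse_le (u x) (v x) (u y) (v y) (C * dX x y ^ α + D * dX x y ^ α)
    (by linarith) (by linarith)
  have h6 := lse_le (u y) (v y) (u x) (v x) (C * dX x y ^ α + D * dX x y ^ α)
    (by linarith) (by linarith)
  rw [abs_le]
  constructor <;> linarith

theorem Maσ_mono {μ : WeakDual ℝ ((ℕ → E) →ᵇ ℝ)} (hμ : μ ∈ Maσ E) {φ ψ : (ℕ → E) →ᵇ ℝ}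
    (h : φ ≤ ψ) : μ φ ≤ μ ψ := by
  have h1 := hμ.1.2 (ψ - φ) (leB.2 fun x => by simpa using leB.1 h x)
  rw [map_sub] at h1
  linarith

theorem avg_normalized (p : Measure E) [IsProbabilityMeasure p] (g : (ℕ → E) →ᵇ ℝ) (P K : ℝ)
    (h : ∀ n x, (RB p g)^[n] 1 x ≤ Real.exp (n * P + K)) (n : ℕ) :
    (avg p)^[n] (expB (SB (g - P • 1) n)) ≤ Real.exp K • 1 := by
  have h1 : expB (SB (g - P • 1) n) = Real.exp (-(n * P)) • (expB (SB g n) * 1) := by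
    ext x
    simp only [expB_apply, BoundedContinuousFunction.coe_smul, mul_one, smul_eq_mul, SB_apply]
    rw [← Real.exp_add]
    simp [Finset.sum_sub_distrib]
    ring
  rw [h1, avgn_smul, ← RB_iter]
  refine leB.2 fun x => ?_
  have h2 := mul_le_mul_of_nonneg_left (h n x) (Real.exp_pos (-(n * P))).le
  rw [← Real.exp_add, neg_add_cancel_left] at h2
  simpa using h2

theorem affine_bound (p : Measure E) [IsProbabilityMeasure p] [Nonempty E] {α : ℝ} (hα : 0 < α)
    {μ ν : WeakDual ℝ ((ℕ → E) →ᵇ ℝ)} (hμ : μ ∈ Maσ E) (hν : ν ∈ Maσ E) {a b : ℝ} (ha : 0 ≤ a)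
    (hb : 0 ≤ b) {g₁ g₂ : (ℕ → E) →ᵇ ℝ} (h₁ : ∃ C, HolderConst α C g₁)
    (h₂ : ∃ C, HolderConst α C g₂) {ε : ℝ} (hε : 0 < ε) :
    ∃ G : (ℕ → E) →ᵇ ℝ, (∃ C, HolderConst α C G) ∧
      -(a * μ G + b * ν G) + logLambda p G ≤
        a * (-μ g₁ + logLambda p g₁) + b * (-ν g₂ + logLambda p g₂) + ε := by
  obtain ⟨K₁, hK₁⟩ := (pressure_exists p hα h₁).2
  obtain ⟨K₂, hK₂⟩ := (pressure_exists p hα h₂).2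
  set P₁ := logLambda p g₁
  set P₂ := logLambda p g₂
  set B := Real.exp K₁ + Real.exp K₂ with hBdef
  have hB : 0 < B := by positivity
  obtain ⟨m, hm⟩ := exists_nat_gt (Real.log B / ε)
  set n := m + 1 with hn
  have hn' : (0 : ℝ) < n := by positivity
  have hBn : Real.log B / n ≤ ε := by
    rw [div_lt_iff₀ hε] at hm
    rw [div_le_iff₀ hn', hn]
    push_cast
    nlinarith
  have hol : ∀ (g : (ℕ → E) →ᵇ ℝ) (P : ℝ), (∃ C, HolderConst α C g) →
      ∃ C, HolderConst α C (g - P • 1 : (ℕ → E) →ᵇ ℝ) := by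
    rintro g P ⟨C, hC⟩
    refine ⟨C, fun x y => ?_⟩
    simpa using hC x y
  set H := lseB (SB (g₁ - P₁ • 1) n) (SB (g₂ - P₂ • 1) n) with hH
  have hHH : ∃ C, HolderConst α C H :=
    holder_lseB (holder_SB hα (hol _ _ h₁) n) (holder_SB hα (hol _ _ h₂) n)
  have hG : ∃ C, HolderConst α C ((1 / (n : ℝ)) • H : (ℕ → E) →ᵇ ℝ) := by
    obtain ⟨C, hC⟩ := hHH
    refine ⟨1 / n * C, fun x y => ?_⟩
    simp only [BoundedContinuousFunction.coe_smul, smul_eq_mul]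
    rw [← mul_sub, abs_mul, abs_of_pos (by positivity : (0 : ℝ) < 1 / n), mul_assoc]
    exact mul_le_mul_of_nonneg_left (hC x y) (by positivity)
  have key : ∀ (ρ : WeakDual ℝ ((ℕ → E) →ᵇ ℝ)) (_ : ρ ∈ Maσ E) (g : (ℕ → E) →ᵇ ℝ) (P : ℝ)
      (_ : SB (g - P • 1) n ≤ H), ρ g - P ≤ ρ ((1 / (n : ℝ)) • H) := by
    intro ρ hρ g P hle
    have h3 := Maσ_mono hρ hle
    rw [SB_invariant ρ hρ, map_sub, map_smul, hρ.1.1, smul_eq_mul, mul_one] at h3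
    rw [map_smul, smul_eq_mul, one_div, ← div_eq_inv_mul, le_div_iff₀ hn']
    linarith
  refine ⟨(1 / (n : ℝ)) • H, hG, ?_⟩
  have k1 := key μ hμ g₁ P₁ (leB.2 fun x => lse_ge_left _ _)
  have k2 := key ν hν g₂ P₂ (leB.2 fun x => lse_ge_right _ _)
  have k3 : logLambda p ((1 / (n : ℝ)) • H : (ℕ → E) →ᵇ ℝ) ≤ Real.log B / n := by
    refine pressure_block p hα n (Nat.succ_pos m) _ H (fun x => ?_) B ?_ hB hG
    · simp only [BoundedContinuousFunction.coe_smul, smul_eq_mul]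
      field_simp
    · rw [hH, expB_lseB, avgn_add]
      refine leB.2 fun x => ?_
      have e1 := leB.1 (avg_normalized p g₁ P₁ K₁ hK₁ n) x
      have e2 := leB.1 (avg_normalized p g₂ P₂ K₂ hK₂ n) x
      simp only [BoundedContinuousFunction.coe_smul, BoundedContinuousFunction.coe_one,
        BoundedContinuousFunction.coe_add, Pi.add_apply,
        Pi.one_apply, smul_eq_mul, mul_one] at e1 e2 ⊢
      linarith
  have k4 := mul_le_mul_of_nonneg_left k1 ha
  have k5 := mul_le_mul_of_nonneg_left k2 hb
  linarith

/-! ### Topology of `Maσ` -/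

theorem Maσ_compact : IsCompact (Maσ E) := by
  have hb : Maσ E ⊆ WeakDual.toStrongDual ⁻¹'
      Metric.closedBall (0 : StrongDual ℝ ((ℕ → E) →ᵇ ℝ)) 1 := by
    intro μ hμ
    have hdist : dist (WeakDual.toStrongDual μ) (0 : StrongDual ℝ ((ℕ → E) →ᵇ ℝ)) =
        ‖WeakDual.toStrongDual μ‖ := dist_zero_right (WeakDual.toStrongDual μ)
    rw [Set.mem_preimage, Metric.mem_closedBall, hdist]
    refine ContinuousLinearMap.opNorm_le_bound _ zero_le_one fun φ => ?_
    rw [one_mul]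
    change |μ φ| ≤ ‖φ‖
    have h1 : μ φ ≤ μ (‖φ‖ • 1) := Maσ_mono hμ (leB.2 fun x => by
      simpa using (abs_le.1 (φ.norm_coe_le_norm x)).2)
    have h2 : μ ((-‖φ‖) • 1) ≤ μ φ := Maσ_mono hμ (leB.2 fun x => by
      simpa using (abs_le.1 (φ.norm_coe_le_norm x)).1)
    rw [map_smul, hμ.1.1, smul_eq_mul, mul_one] at h1 h2
    exact abs_le.2 ⟨h2, h1⟩
  refine (WeakDual.isCompact_closedBall (0 : StrongDual ℝ ((ℕ → E) →ᵇ ℝ)) 1).of_isClosed_subset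
    ?_ hb
  have : Maσ E = {μ | μ 1 = 1} ∩ (⋂ g : (ℕ → E) →ᵇ ℝ, {μ | 0 ≤ g → 0 ≤ μ g}) ∩
      ⋂ g : (ℕ → E) →ᵇ ℝ, {μ | μ (g.compContinuous shiftCM) = μ g} := by
    ext μ
    simp [Maσ, Ma1]
  rw [this]
  refine (IsClosed.inter ?_ ?_).inter ?_
  · exact isClosed_eq (WeakDual.eval_continuous _) continuous_const
  · refine isClosed_iInter fun g => ?_
    by_cases hg : 0 ≤ g
    · simp only [hg, true_imp_iff]
      exact isClosed_le continuous_const (WeakDual.eval_continuous _)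
    · simp [hg]
  · exact isClosed_iInter fun g =>
      isClosed_eq (WeakDual.eval_continuous _) (WeakDual.eval_continuous _)

theorem Maσ_nonempty [Nonempty E] : (Maσ E).Nonempty := by
  let e : E := Classical.arbitrary E
  let x : ℕ → E := fun _ => e
  refine ⟨StrongDual.toWeakDual (BoundedContinuousFunction.evalCLM ℝ x), ⟨?_, ?_⟩, ?_⟩
  · rfl
  · intro g hg
    exact leB.1 hg x
  · intro g
    rfl

theorem le_functional_iff [Nonempty E] (p : Measure E) (α : ℝ) (f : (ℕ → E) →ᵇ ℝ)
    (μ : WeakDual ℝ ((ℕ → E) →ᵇ ℝ)) (c : EReal) :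
    c ≤ entropyV p α μ + ((μ f : ℝ) : EReal) ↔
      ∀ g : (ℕ → E) →ᵇ ℝ, (∃ C : ℝ, HolderConst α C ⇑g) →
        c ≤ ((-(μ g) + logLambda p ⇑g + μ f : ℝ) : EReal) := by
  have hs : ∀ d : EReal, c ≤ d + ((μ f : ℝ) : EReal) ↔ c - ((μ f : ℝ) : EReal) ≤ d := fun d =>
    (EReal.sub_le_iff_le_add (Or.inl (EReal.coe_ne_bot _)) (Or.inl (EReal.coe_ne_top _))).symm
  rw [hs, entropyV, le_sInf_iff]
  constructor
  · intro h g hg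
    rw [EReal.coe_add _ (μ f), hs]
    exact h _ ⟨g, hg, rfl⟩
  · rintro h _ ⟨g, hg, rfl⟩
    rw [← hs, ← EReal.coe_add]
    exact h g hg

/-- Existence of equilibrium states: for any bounded continuous
potential `f` there is `μ_f ∈ M^a_σ(X)`, which may be chosen to be an extreme point
of `M^a_σ(X)`, realizing `sup_{μ ∈ M^a_σ(X)} [h^v(μ) + μ(f)]`. -/
theorem statement15 {E : Type*} [MetricSpace E] [CompleteSpace E]
    [TopologicalSpace.SeparableSpace E] [MeasurableSpace E] [BorelSpace E] [Nonempty E]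
    (p : Measure E) [IsProbabilityMeasure p]
    (α : ℝ) (hα0 : 0 < α) (hα1 : α < 1)
    (f : (ℕ → E) →ᵇ ℝ) :
    ∃ μf : WeakDual ℝ ((ℕ → E) →ᵇ ℝ), μf ∈ Maσ E ∧
      μf ∈ Set.extremePoints ℝ (Maσ E) ∧
      entropyV p α μf + ((μf f : ℝ) : EReal) =
        ⨆ μ ∈ Maσ E, entropyV p α μ + ((μ f : ℝ) : EReal) := by
  set F : WeakDual ℝ ((ℕ → E) →ᵇ ℝ) → EReal :=
    fun μ => entropyV p α μ + ((μ f : ℝ) : EReal) with hF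
  have hclosed : ∀ c : EReal, IsClosed {μ | c ≤ F μ} := by
    intro c
    have : {μ | c ≤ F μ} = ⋂ g : (ℕ → E) →ᵇ ℝ,
        {μ | (∃ C : ℝ, HolderConst α C ⇑g) →
          c ≤ ((-(μ g) + logLambda p ⇑g + μ f : ℝ) : EReal)} := by
      ext μ
      simp only [Set.mem_ofPred_eq, Set.mem_iInter]
      exact le_functional_iff p α f μ c
    rw [this]
    refine isClosed_iInter fun g => ?_
    by_cases hg : ∃ C : ℝ, HolderConst α C ⇑g
    · simp only [hg, true_imp_iff]
      refine isClosed_le continuous_const (continuous_coe_real_ereal.comp ?_)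
      exact ((WeakDual.eval_continuous g).neg.add continuous_const).add
        (WeakDual.eval_continuous f)
    · simp [hg]
  have husc : UpperSemicontinuous F := upperSemicontinuous_iff_isClosed_preimage.2 hclosed
  obtain ⟨μ₀, hμ₀, hmax⟩ := (husc.upperSemicontinuousOn (Maσ E)).exists_isMaxOn
    Maσ_nonempty Maσ_compact
  have hmax' : ∀ μ ∈ Maσ E, F μ ≤ F μ₀ := fun μ hμ => hmax hμ
  set M : Set (WeakDual ℝ ((ℕ → E) →ᵇ ℝ)) := Maσ E ∩ {μ | F μ₀ ≤ F μ} with hM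
  have hMc : IsCompact M := Maσ_compact.inter_right (hclosed _)
  have hMn : M.Nonempty := ⟨μ₀, hμ₀, le_refl (F μ₀)⟩
  have hext : IsExtreme ℝ (Maσ E) M := by
    refine ⟨Set.inter_subset_left, ?_⟩
    rintro μ hμ ν hν z ⟨_, hzF⟩ ⟨a, b, ha, hb, hab, rfl⟩
    refine ⟨hμ, ?_⟩
    by_contra hlt
    rw [Set.mem_ofPred_eq] at hlt hzF
    have h1 : ¬ ∀ g : (ℕ → E) →ᵇ ℝ, (∃ C : ℝ, HolderConst α C ⇑g) →
        F μ₀ ≤ ((-(μ g) + logLambda p ⇑g + μ f : ℝ) : EReal) :=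
      fun h => hlt ((le_functional_iff p α f μ _).2 h)
    push Not at h1
    obtain ⟨g₁, hg₁, hr⟩ := h1
    set r := -(μ g₁) + logLambda p ⇑g₁ + μ f with hrdef
    have hz := (le_functional_iff p α f (a • μ + b • ν) (F μ₀)).1 hzF
    obtain ⟨v, hv⟩ : ∃ v : ℝ, F μ₀ = v := by
      refine ⟨(F μ₀).toReal, (EReal.coe_toReal ?_ ?_).symm⟩
      · intro h
        have := hz g₁ hg₁
        rw [h, top_le_iff] at this
        exact EReal.coe_ne_top _ this
      · intro h
        rw [h] at hr
        exact not_lt_bot hr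
    rw [hv] at hr hz
    have hr' : r < v := EReal.coe_lt_coe_iff.1 hr
    set ε := a * (v - r) / 3 with hε
    have hεpos : 0 < ε := by
      have := mul_pos ha (sub_pos.2 hr')
      positivity
    have h2 : ¬ ∀ g : (ℕ → E) →ᵇ ℝ, (∃ C : ℝ, HolderConst α C ⇑g) →
        ((v + ε : ℝ) : EReal) ≤ ((-(ν g) + logLambda p ⇑g + ν f : ℝ) : EReal) := by
      intro h
      have h3 := ((le_functional_iff p α f ν _).2 h).trans (hmax' ν hν)
      rw [hv] at h3
      have := EReal.coe_le_coe_iff.1 h3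
      linarith
    push Not at h2
    obtain ⟨g₂, hg₂, hs⟩ := h2
    have hs' := EReal.coe_lt_coe_iff.1 hs
    obtain ⟨G, hG, hGle⟩ := affine_bound p hα0 hμ hν ha.le hb.le hg₁ hg₂ hεpos
    have h4 := EReal.coe_le_coe_iff.1 (hz G hG)
    have h5 : ∀ φ, (a • μ + b • ν) φ = a * μ φ + b * ν φ := fun φ => rfl
    rw [h5, h5] at h4
    have h6 : b * (-(ν g₂) + logLambda p ⇑g₂ + ν f) ≤ b * (v + ε) :=
      mul_le_mul_of_nonneg_left hs'.le hb.le
    have h7 : b * ε ≤ ε := mul_le_of_le_one_left hεpos.le (by linarith)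
    have h8 : 3 * ε = a * v - a * r := by rw [hε]; ring
    have h9 : v = a * v + b * v := by rw [← add_mul, hab, one_mul]
    have h10 : a * r = a * (-(μ g₁) + logLambda p ⇑g₁) + a * μ f := by rw [hrdef]; ring
    linarith
  have : LocallyConvexSpace ℝ (WeakDual ℝ ((ℕ → E) →ᵇ ℝ)) :=
    LocallyConvexSpace.induced (𝕜 := ℝ) (F := ((ℕ → E) →ᵇ ℝ) → ℝ)
      (⟨⟨fun μ φ => μ φ, fun _ _ => rfl⟩, fun _ _ => rfl⟩ :
        WeakDual ℝ ((ℕ → E) →ᵇ ℝ) →ₗ[ℝ] (((ℕ → E) →ᵇ ℝ) → ℝ))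
  obtain ⟨μf, hμf⟩ := hMc.extremePoints_nonempty hMn
  have hμM : μf ∈ M := hμf.1
  refine ⟨μf, hμM.1, hext.extremePoints_subset_extremePoints hμf, ?_⟩
  refine le_antisymm ?_ ?_
  · exact le_iSup₂_of_le μf hμM.1 le_rfl
  · exact iSup₂_le fun μ hμ => (hmax' μ hμ).trans hμM.2

end
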